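/- arXiv:1906.05905 — 2 statements merged into one kernel-verified Lean document; each statement's English description precedes it below -/
import Mathlib

section
/- Let H be a Hilbert space and ρ a positive trace-class operator. Then for every bounded operator x ∈ B(H), the operator ρ^{1/4} x ρ^{1/4} is Hilbert-Schmidt, with ‖ρ^{1/4} x ρ^{1/4}‖₂² ≤ Tr(x ρ x*)^{1/2} Tr(x* ρ x)^{1/2} < ∞. -/
set_option synthInstance.maxHeartbeats 1000000
set_option maxHeartbeats 1000000

open scoped InnerProductSpace ComplexOrder

/-!
Write `s = ρ^{1/4}` and `r = s * s = ρ^{1/2}`, so that `r * r = ρ` and `r` is Hilbert-Schmidt.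
Formally, cyclicity of the trace and Cauchy-Schwarz give
`‖s x s‖₂² = Tr (s x* r x s) = ⟪x r, r x⟫₂ ≤ ‖x r‖₂ ‖r x‖₂`, where
`‖x r‖₂² = ‖r x*‖₂² = Tr (x ρ x*)` and `‖r x‖₂² = Tr (x* ρ x)`.
Since `s` itself need not be Hilbert-Schmidt, cyclicity is not directly available. For `ε > 0`
replace `s` by `t = s² (s + ε)⁻¹` (`exists_approx`), which is Hilbert-Schmidt, satisfies `‖t - s‖ ≤ ε`,
and has `t² = k² r` with `k = s (s + ε)⁻¹` a contraction commuting with `s`. Then the computation is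
valid for `t` (`tsum_sandwich_le`), with a bound independent of `ε`, and `ε → 0` on finite partial
sums yields the claim.

The only form of cyclicity needed is `⟪A, B⟫₂ = ⟪B*, A*⟫₂` for Hilbert-Schmidt `A`, `B`
(`IsHS.tsum_inner_adjoint`), which is Fubini for the matrix coefficients in the basis `b`.
-/

section HilbertSchmidt

variable {ι H : Type*} [NormedAddCommGroup H] [InnerProductSpace ℂ H]

/-- `A` is Hilbert-Schmidt, the condition being tested on the fixed Hilbert basis `b`. -/
def IsHS (b : HilbertBasis ι ℂ H) (A : H →L[ℂ] H) : Prop :=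
  Summable fun i => ‖A (b i)‖ ^ 2

/-- Parseval's identity. -/
lemma hasSum_norm_inner_sq (b : HilbertBasis ι ℂ H) (v : H) :
    HasSum (fun j => ‖⟪b j, v⟫_ℂ‖ ^ 2) (‖v‖ ^ 2) := by
  have h := b.hasSum_inner_mul_inner v v
  rw [inner_self_eq_norm_sq_to_K] at h
  have h2 : (fun j => ⟪v, b j⟫_ℂ * ⟪b j, v⟫_ℂ) = fun j => ((‖⟪b j, v⟫_ℂ‖ ^ 2 : ℝ) : ℂ) := by
    funext j
    rw [← inner_conj_symm v (b j), Complex.conj_mul']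
    push_cast
    rfl
  rw [h2] at h
  exact Complex.hasSum_ofReal.1 (by simpa using h)

variable {b : HilbertBasis ι ℂ H} {A B : H →L[ℂ] H}

lemma IsHS.summable_matrix (hA : IsHS b A) :
    Summable fun p : ι × ι => ‖⟪b p.2, A (b p.1)⟫_ℂ‖ ^ 2 := by
  rw [summable_prod_of_nonneg (fun _ => by positivity)]
  refine ⟨fun i => (hasSum_norm_inner_sq b (A (b i))).summable, ?_⟩
  simp only [(hasSum_norm_inner_sq b (A (b _))).tsum_eq]
  exact hA

lemma IsHS.mul_left (hA : IsHS b A) (C : H →L[ℂ] H) : IsHS b (C * A) := by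
  refine Summable.of_nonneg_of_le (fun _ => by positivity) (fun i => ?_)
    (Summable.mul_left (‖C‖ ^ 2) hA)
  rw [← mul_pow]
  gcongr
  exact C.le_opNorm _

/-- Cauchy-Schwarz for the Hilbert-Schmidt inner product. -/
lemma IsHS.norm_tsum_inner_le (hA : IsHS b A) (hB : IsHS b B) :
    ‖∑' i, ⟪A (b i), B (b i)⟫_ℂ‖ ≤
      √(∑' i, ‖A (b i)‖ ^ 2) * √(∑' i, ‖B (b i)‖ ^ 2) := by
  have hF (F : Finset ι) : ∑ i ∈ F, ‖⟪A (b i), B (b i)⟫_ℂ‖ ≤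
      √(∑' i, ‖A (b i)‖ ^ 2) * √(∑' i, ‖B (b i)‖ ^ 2) := by
    calc _ ≤ ∑ i ∈ F, ‖A (b i)‖ * ‖B (b i)‖ := by
          gcongr with i
          exact norm_inner_le_norm _ _
      _ ≤ √(∑ i ∈ F, ‖A (b i)‖ ^ 2) * √(∑ i ∈ F, ‖B (b i)‖ ^ 2) :=
          Real.sum_mul_le_sqrt_mul_sqrt _ _ _
      _ ≤ _ := by
          gcongr
          · exact hA.sum_le_tsum F fun _ _ => by positivity
          · exact hB.sum_le_tsum F fun _ _ => by positivity
  exact (norm_tsum_le_tsum_norm (summable_of_sum_le (fun _ => norm_nonneg _) hF)).trans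
    (Real.tsum_le_of_sum_le (fun _ => norm_nonneg _) hF)

variable [CompleteSpace H]

lemma IsHS.adjoint (hA : IsHS b A) : IsHS b (star A) := by
  have h := hA.summable_matrix.prod_symm
  have h2 := h.prod
  unfold IsHS
  refine h2.congr fun i => ?_
  rw [← (hasSum_norm_inner_sq b _).tsum_eq]
  congr 1
  funext j
  rw [ContinuousLinearMap.star_eq_adjoint, ContinuousLinearMap.adjoint_inner_right,
    ← norm_inner_symm]
  rfl

lemma IsHS.mul_right (hA : IsHS b A) (C : H →L[ℂ] H) : IsHS b (A * C) := by
  have h := (hA.adjoint.mul_left (star C)).adjoint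
  rwa [star_mul, star_star, star_star] at h

/-- The Hilbert-Schmidt inner product satisfies `⟪A, B⟫₂ = ⟪B*, A*⟫₂`. -/
lemma IsHS.tsum_inner_adjoint (hA : IsHS b A) (hB : IsHS b B) :
    ∑' i, ⟪A (b i), B (b i)⟫_ℂ = ∑' i, ⟪star B (b i), star A (b i)⟫_ℂ := by
  have hs : Summable (Function.uncurry fun i j => ⟪A (b i), b j⟫_ℂ * ⟪b j, B (b i)⟫_ℂ) := by
    refine Summable.of_norm_bounded (hA.summable_matrix.add hB.summable_matrix) ?_
    rintro ⟨i, j⟩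
    simp only [Function.uncurry, norm_mul]
    rw [norm_inner_symm]
    nlinarith [sq_nonneg (‖⟪b j, A (b i)⟫_ℂ‖ - ‖⟪b j, B (b i)⟫_ℂ‖),
      norm_nonneg ⟪b j, A (b i)⟫_ℂ, norm_nonneg ⟪b j, B (b i)⟫_ℂ]
  have h := hs.tsum_comm
  simp only [(b.hasSum_inner_mul_inner _ _).tsum_eq] at h
  rw [← h]
  congr 1
  funext j
  rw [← (b.hasSum_inner_mul_inner _ _).tsum_eq]
  congr 1
  funext i
  rw [ContinuousLinearMap.star_eq_adjoint, ContinuousLinearMap.star_eq_adjoint,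
    ContinuousLinearMap.adjoint_inner_right, ContinuousLinearMap.adjoint_inner_left, mul_comm]

lemma IsHS.tsum_adjoint (hA : IsHS b A) :
    ∑' i, ‖star A (b i)‖ ^ 2 = ∑' i, ‖A (b i)‖ ^ 2 := by
  have h := hA.tsum_inner_adjoint hA
  simp only [inner_self_eq_norm_sq_to_K] at h
  exact_mod_cast h.symm

/-- For `t` self-adjoint and Hilbert-Schmidt, `‖t x t‖₂² = ⟪x t², t² x⟫₂ ≤ ‖x t²‖₂ ‖t² x‖₂`. -/
lemma tsum_sandwich_le {t : H →L[ℂ] H} (ht : IsHS b t) (hsa : IsSelfAdjoint t) (x : H →L[ℂ] H) :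
    ∑' i, ‖(t * x * t) (b i)‖ ^ 2 ≤
      √(∑' i, ‖(x * (t * t)) (b i)‖ ^ 2) * √(∑' i, ‖(t * t * x) (b i)‖ ^ 2) := by
  have hsw (v w : H) : ⟪t v, w⟫_ℂ = ⟪v, t w⟫_ℂ := by
    conv_lhs => rw [← hsa.star_eq, ContinuousLinearMap.star_eq_adjoint,
      ContinuousLinearMap.adjoint_inner_left]
  have key : ((∑' i, ‖(t * x * t) (b i)‖ ^ 2 : ℝ) : ℂ) =
      ∑' i, ⟪(x * (t * t)) (b i), (t * t * x) (b i)⟫_ℂ := by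
    calc ((∑' i, ‖(t * x * t) (b i)‖ ^ 2 : ℝ) : ℂ)
        = ∑' i, ⟪(star (t * x) * (t * x * t)) (b i), t (b i)⟫_ℂ := by
          rw [Complex.ofReal_tsum]
          congr 1
          funext i
          change _ = ⟪star (t * x) ((t * x * t) (b i)), t (b i)⟫_ℂ
          rw [ContinuousLinearMap.star_eq_adjoint, ContinuousLinearMap.adjoint_inner_left]
          change _ = ⟪(t * x * t) (b i), (t * x * t) (b i)⟫_ℂ
          rw [inner_self_eq_norm_sq_to_K]
          push_cast
          rfl
      _ = ∑' i, ⟪t (b i), (star (t * x * t) * (t * x)) (b i)⟫_ℂ := by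
          rw [((ht.mul_left (t * x)).mul_left (star (t * x))).tsum_inner_adjoint ht,
            star_mul (star (t * x)), star_star, hsa.star_eq]
      _ = _ := by
          congr 1
          funext i
          rw [mul_apply_eq_comp, ContinuousLinearMap.star_eq_adjoint,
            ContinuousLinearMap.adjoint_inner_right]
          exact hsw _ _
  have h := ((ht.mul_right t).mul_left x).norm_tsum_inner_le ((ht.mul_right t).mul_right x)
  rw [← key, Complex.norm_real] at h
  exact (le_abs_self _).trans h

end HilbertSchmidt

section Approximation

variable {H : Type*} [NormedAddCommGroup H] [InnerProductSpace ℂ H] [CompleteSpace H]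

/-- With `m = (s + ε)⁻¹` and `k = s (s + ε)⁻¹`, the operator `k s = m s²` is within `ε` of `s`. -/
lemma exists_approx {s : H →L[ℂ] H} (hs : 0 ≤ s) {ε : ℝ} (hε : 0 < ε) :
    ∃ m k : H →L[ℂ] H, Commute k s ∧ IsSelfAdjoint k ∧ ‖k‖ ≤ 1 ∧ k * s = m * (s * s) ∧
      ‖k * s - s‖ ≤ ε := by
  have hsa : IsSelfAdjoint s := .of_nonneg hs
  have hsp : ∀ u ∈ spectrum ℝ s, 0 ≤ u := fun u hu => spectrum_nonneg_of_nonneg hs hu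
  have hm : ContinuousOn (fun u : ℝ => (u + ε)⁻¹) (spectrum ℝ s) :=
    ContinuousOn.inv₀ (by fun_prop) fun u hu => by have := hsp u hu; positivity
  have hk : ContinuousOn (fun u : ℝ => (u + ε)⁻¹ * u) (spectrum ℝ s) := hm.mul continuousOn_id
  have hid : cfc (fun u : ℝ => u) s = s := cfc_id' ℝ s
  have e1 : cfc (fun u : ℝ => (u + ε)⁻¹ * u) s = cfc (fun u : ℝ => (u + ε)⁻¹) s * s := by
    rw [cfc_mul _ _ s hm, hid]
  have e2 : cfc (fun u : ℝ => (u + ε)⁻¹ * u * u) s = cfc (fun u : ℝ => (u + ε)⁻¹ * u) s * s := by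
    rw [cfc_mul _ _ s hk, hid]
  have e3 : cfc (fun u : ℝ => (u + ε)⁻¹ * u * u - u) s =
      cfc (fun u : ℝ => (u + ε)⁻¹ * u) s * s - s := by
    rw [cfc_sub (fun u : ℝ => (u + ε)⁻¹ * u * u) (fun u => u) s (hk.mul continuousOn_id), e2, hid]
  refine ⟨cfc (fun u : ℝ => (u + ε)⁻¹) s, cfc (fun u : ℝ => (u + ε)⁻¹ * u) s, ?_,
    cfc_predicate _ s, ?_, ?_, ?_⟩
  · conv => arg 2; rw [← hid]
    exact cfc_commute_cfc _ _ s
  · refine norm_cfc_le zero_le_one fun u hu => ?_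
    have := hsp u hu
    rw [Real.norm_of_nonneg (by positivity), inv_mul_le_one₀ (by positivity)]
    linarith
  · rw [e1, mul_assoc]
  · rw [← e3]
    refine norm_cfc_le hε.le fun u hu => ?_
    have := hsp u hu
    have hu' : (u + ε)⁻¹ * u * u - u = -(u / (u + ε) * ε) := by field_simp; ring
    rw [hu', norm_neg, Real.norm_of_nonneg (by positivity)]
    exact mul_le_of_le_one_left hε.le ((div_le_one (by positivity)).2 (by linarith))

end Approximation

/-- Let `H` be a Hilbert space and `ρ` a positive trace-class operator.  For every
bounded operator `x` on `H`, the operator `ρ^{1/4} x ρ^{1/4}` is Hilbert-Schmidt with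
`‖ρ^{1/4} x ρ^{1/4}‖₂² ≤ Tr(x ρ x*)^{1/2} · Tr(x* ρ x)^{1/2} < ∞`.  Traces and
Hilbert-Schmidt sums are computed with respect to a Hilbert basis `b` of `H`. -/
theorem iRho_into_S2
    {ι H : Type*} [NormedAddCommGroup H] [InnerProductSpace ℂ H] [CompleteSpace H]
    (b : HilbertBasis ι ℂ H) (ρ : H →L[ℂ] H) (hρpos : 0 ≤ ρ)
    (htc : Summable fun i => ⟪b i, ρ (b i)⟫_ℂ)
    (x : H →L[ℂ] H) :
    (Summable fun i => ‖(CFC.nnrpow ρ (1/4) * x * CFC.nnrpow ρ (1/4)) (b i)‖ ^ 2)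
      ∧ (Summable fun i => ⟪b i, (x * ρ * star x) (b i)⟫_ℂ)
      ∧ (Summable fun i => ⟪b i, (star x * ρ * x) (b i)⟫_ℂ)
      ∧ (∑' i, ‖(CFC.nnrpow ρ (1/4) * x * CFC.nnrpow ρ (1/4)) (b i)‖ ^ 2)
          ≤ Real.sqrt ((∑' i, ⟪b i, (x * ρ * star x) (b i)⟫_ℂ).re) *
            Real.sqrt ((∑' i, ⟪b i, (star x * ρ * x) (b i)⟫_ℂ).re) := by
  set s := CFC.nnrpow ρ (1/4) with hs_def
  have hs : 0 ≤ s := CFC.nnrpow_nonneg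
  have hsa : IsSelfAdjoint s := .of_nonneg hs
  obtain ⟨r, hr⟩ : ∃ r, r = s * s := ⟨_, rfl⟩
  have hrsa : star r = r := by rw [hr, star_mul, hsa.star_eq]
  have hrr : r * r = ρ := by
    have h1 : s * s = ρ ^ (1 / 2 : NNReal) := by
      rw [hs_def, CFC.nnrpow_eq_pow, ← CFC.nnrpow_add (by norm_num) (by norm_num)]
      congr 1
      rw [← NNReal.coe_inj]
      norm_num
    rw [hr, h1, ← CFC.nnrpow_add (by norm_num) (by norm_num), add_halves, CFC.nnrpow_one ρ]
  -- The diagonal entries of `y* ρ y` are those of `(r y)* (r y)`; used for `y = 1`, `x` and `x*`.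
  have htr (y : H →L[ℂ] H) (v : H) : ⟪v, (star y * ρ * y) v⟫_ℂ = ((‖(r * y) v‖ ^ 2 : ℝ) : ℂ) := by
    have h : star y * ρ * y = star (r * y) * (r * y) := by
      rw [star_mul, hrsa, ← hrr]; simp only [mul_assoc]
    rw [h, mul_apply_eq_comp, ContinuousLinearMap.star_eq_adjoint,
      ContinuousLinearMap.adjoint_inner_right, inner_self_eq_norm_sq_to_K]
    push_cast
    rfl
  have hrHS : IsHS b r := by
    have h1 := htr 1
    simp only [star_one, one_mul, mul_one] at h1
    simp only [h1] at htc
    exact Complex.summable_ofReal.1 htc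
  have hx2 := htr (star x)
  simp only [star_star] at hx2
  simp only [htr, hx2, Complex.summable_ofReal, ← Complex.ofReal_tsum, Complex.ofReal_re]
  have hF (F : Finset ι) : ∑ i ∈ F, ‖(s * x * s) (b i)‖ ^ 2 ≤
      √(∑' i, ‖(r * star x) (b i)‖ ^ 2) * √(∑' i, ‖(r * x) (b i)‖ ^ 2) := by
    -- Approximants `t = k n * s` of `s` with `ε = 1 / (n + 1)`.
    choose m k hcomm hk hk1 hms happ using
      fun n : ℕ => exists_approx hs (ε := 1 / ((n : ℝ) + 1)) (by positivity)
    have hlim : Filter.Tendsto (fun n => k n * s) Filter.atTop (nhds s) := by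
      rw [tendsto_iff_norm_sub_tendsto_zero]
      exact squeeze_zero (fun _ => norm_nonneg _) happ tendsto_one_div_add_atTop_nhds_zero_nat
    have hlim2 : Filter.Tendsto (fun n => ∑ i ∈ F, ‖(k n * s * x * (k n * s)) (b i)‖ ^ 2)
        Filter.atTop (nhds (∑ i ∈ F, ‖(s * x * s) (b i)‖ ^ 2)) := by
      refine tendsto_finsetSum _ fun i _ => ?_
      have h : Continuous fun t : H →L[ℂ] H => ‖(t * x * t) (b i)‖ ^ 2 := by fun_prop
      exact (h.tendsto s).comp hlim
    refine le_of_tendsto hlim2 (.of_forall fun n => ?_)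
    have htsa : IsSelfAdjoint (k n * s) := by
      rw [IsSelfAdjoint, star_mul, hsa.star_eq, (hk n).star_eq, (hcomm n).eq]
    have htHS : IsHS b (k n * s) := by
      rw [hms, ← hr]
      exact hrHS.mul_left _
    have htt : k n * s * (k n * s) = k n * k n * r := by
      rw [hr, mul_assoc, ← mul_assoc s, ← (hcomm n).eq]
      simp only [mul_assoc]
    -- `t² y = k² (r y)` with `k` a contraction.
    have hle (y : H →L[ℂ] H) : ∑' i, ‖(k n * s * (k n * s) * y) (b i)‖ ^ 2 ≤
        ∑' i, ‖(r * y) (b i)‖ ^ 2 := by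
      refine Summable.tsum_le_tsum (fun i => ?_) ((htHS.mul_left _).mul_right y)
        (hrHS.mul_right y)
      rw [htt, mul_assoc]
      gcongr
      calc ‖k n (k n ((r * y) (b i)))‖ ≤ 1 * ‖k n ((r * y) (b i))‖ :=
            (k n).le_of_opNorm_le (hk1 n) _
        _ ≤ 1 * (1 * ‖(r * y) (b i)‖) := by
            gcongr
            exact (k n).le_of_opNorm_le (hk1 n) _
        _ = _ := by ring
    refine ((((htHS.mul_left (k n * s * x))).sum_le_tsum F fun _ _ => by positivity).trans (tsum_sandwich_le htHS htsa x)).trans ?_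
    -- `‖x t²‖₂ = ‖t² x*‖₂` brings both factors into the form handled by `hle`.
    rw [← IsHS.tsum_adjoint, star_mul, star_mul, htsa.star_eq]
    · exact mul_le_mul (Real.sqrt_le_sqrt (hle _)) (Real.sqrt_le_sqrt (hle _))
        (Real.sqrt_nonneg _) (Real.sqrt_nonneg _)
    · exact (htHS.mul_left _).mul_left x
  exact ⟨summable_of_sum_le (fun _ => by positivity) hF, hrHS.mul_right _, hrHS.mul_right _,
    Real.tsum_le_of_sum_le (fun _ => by positivity) hF⟩
end

section
/- Let H be a Hilbert space and ρ a positive injective trace-class operator. Then the set {ρ^{1/4} x ρ^{3/4} : x ∈ B(H)} (equivalently i_ρ(B(H)ρ^{1/2})) is dense in S₂(H). -/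
set_option synthInstance.maxHeartbeats 1000000
set_option maxHeartbeats 1000000

open scoped InnerProductSpace ComplexOrder

/-!
Fix a Hilbert basis `b`. A Hilbert–Schmidt operator `T` is identified with the family
`i ↦ T (b i)`, an element of the Hilbert space `lp (fun _ => H) 2`; its norm there is the
Hilbert–Schmidt norm. Put `A = ρ^{1/4}` and `B = ρ^{3/4}`. Since `A * B = ρ = B * A`, both are
injective, and being self-adjoint they have dense range (`denseRange_of_nonneg_of_injective`).

Those square-summable families that come from operators of the form `A * x * B` form a subspace
(`sandwichRange`). It contains the rank-one operators `h ↦ ⟪B v, h⟫ • A u`. The rank-one operator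
`h ↦ ⟪v, h⟫ • w` depends continuously on `w` and on `v` separately, because its Hilbert–Schmidt
norm is `‖v‖ * ‖w‖`, so the closure of the subspace contains all rank-one operators
(`rankOneFamily_mem_closure`). Finally `y` is the Hilbert–Schmidt sum of the rank-one operators
`h ↦ ⟪b i, h⟫ • y (b i)`.
-/

section HilbertSchmidtDensity

variable {ι H : Type*} [NormedAddCommGroup H]

theorem memlp_two_iff (f : ι → H) :
    Memℓp f 2 ↔ Summable fun i => ‖f i‖ ^ 2 := by
  rw [memℓp_gen_iff (by norm_num)]
  norm_num

theorem lp_two_norm_eq_sqrt (f : lp (fun _ : ι => H) 2) :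
    ‖f‖ = Real.sqrt (∑' i, ‖f i‖ ^ 2) := by
  rw [lp.norm_eq_tsum_rpow (by norm_num), Real.sqrt_eq_rpow]
  norm_num

variable [InnerProductSpace ℂ H] (b : HilbertBasis ι ℂ H)

/-- Parseval's identity for the family `i ↦ ⟪v, b i⟫ • w`: the Hilbert–Schmidt norm of the
rank-one operator `h ↦ ⟪v, h⟫ • w` is `‖v‖ * ‖w‖`. -/
theorem hasSum_rankOne (w v : H) :
    HasSum (fun i => ‖⟪v, b i⟫_ℂ • w‖ ^ 2) ((‖v‖ * ‖w‖) ^ 2) := by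
  have h := lp.hasSum_norm (p := 2) (by norm_num) (b.repr v)
  simp only [LinearIsometryEquiv.norm_map, b.repr_apply_apply] at h
  norm_num at h
  simpa only [norm_smul, mul_pow, norm_inner_symm v] using h.mul_right (‖w‖ ^ 2)

/-- The rank-one operator `h ↦ ⟪v, h⟫ • w`, seen as the family of its values on the basis `b`. -/
noncomputable def rankOneFamily (w v : H) : lp (fun _ : ι => H) 2 :=
  ⟨fun i => ⟪v, b i⟫_ℂ • w, (memlp_two_iff _).2 (hasSum_rankOne b w v).summable⟩

theorem rankOneFamily_apply (w v : H) (i : ι) :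
    rankOneFamily b w v i = ⟪v, b i⟫_ℂ • w := rfl

theorem norm_rankOneFamily (w v : H) : ‖rankOneFamily b w v‖ = ‖v‖ * ‖w‖ := by
  rw [lp_two_norm_eq_sqrt]
  simp only [rankOneFamily_apply]
  rw [(hasSum_rankOne b w v).tsum_eq, Real.sqrt_sq (by positivity)]

theorem continuous_rankOneFamily_left (v : H) :
    Continuous fun w => rankOneFamily b w v := by
  let f : H →+ lp (fun _ : ι => H) 2 := AddMonoidHom.mk' (fun w => rankOneFamily b w v) (by
    intro w w'
    ext i
    simp [rankOneFamily_apply])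
  exact AddMonoidHomClass.continuous_of_bound f ‖v‖ fun w => (norm_rankOneFamily b w v).le

theorem continuous_rankOneFamily_right (w : H) :
    Continuous fun v => rankOneFamily b w v := by
  let f : H →+ lp (fun _ : ι => H) 2 := AddMonoidHom.mk' (fun v => rankOneFamily b w v) (by
    intro v v'
    ext i
    simp [rankOneFamily_apply, add_smul])
  exact AddMonoidHomClass.continuous_of_bound f ‖w‖ fun v =>
    ((norm_rankOneFamily b w v).trans (mul_comm _ _)).le

/-- The Hilbert–Schmidt operators of the form `A * x * B` with `x` bounded, each given by the
family of its values on the basis `b`. -/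
def sandwichRange (A B : H →L[ℂ] H) : Submodule ℂ (lp (fun _ : ι => H) 2) where
  carrier := {f | ∃ x : H →L[ℂ] H, ∀ i, f i = (A * x * B) (b i)}
  zero_mem' := ⟨0, fun i => by simp⟩
  add_mem' := by
    rintro f g ⟨x, hx⟩ ⟨x', hx'⟩
    exact ⟨x + x', fun i => by simp [hx, hx', mul_add, add_mul]⟩
  smul_mem' := by
    rintro c f ⟨x, hx⟩
    exact ⟨c • x, fun i => by simp [hx]⟩

variable [CompleteSpace H]

theorem denseRange_of_nonneg_of_injective {A : H →L[ℂ] H} (hA : 0 ≤ A)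
    (hinj : Function.Injective A) : DenseRange A := by
  have hker : A.rangeᗮ = ⊥ := by
    rw [ContinuousLinearMap.orthogonal_range, (IsSelfAdjoint.of_nonneg hA).adjoint_eq]
    exact LinearMap.ker_eq_bot.2 hinj
  have := (Submodule.topologicalClosure_eq_top_iff (K := A.range)).2 hker
  exact Submodule.dense_iff_topologicalClosure_eq_top.2 this

theorem rankOneFamily_mem_closure {A B : H →L[ℂ] H} (hB : IsSelfAdjoint B)
    (hAd : DenseRange A) (hBd : DenseRange B) (w v : H) :
    rankOneFamily b w v ∈ (sandwichRange b A B).topologicalClosure := by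
  have hcl := (sandwichRange b A B).isClosed_topologicalClosure
  refine hBd.induction_on (p := fun v => rankOneFamily b w v ∈ _) v
    (hcl.preimage (continuous_rankOneFamily_right b w)) fun v => ?_
  refine hAd.induction_on (p := fun w => rankOneFamily b w (B v) ∈ _) w
    (hcl.preimage (continuous_rankOneFamily_left b (B v))) fun u => ?_
  refine Submodule.le_topologicalClosure _ ⟨(innerSL ℂ v).smulRight u, fun i => ?_⟩
  have h : ⟪B v, b i⟫_ℂ = ⟪v, B (b i)⟫_ℂ := by
    rw [← ContinuousLinearMap.adjoint_inner_right, hB.adjoint_eq]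
  simp [rankOneFamily_apply, h]

end HilbertSchmidtDensity

/-- Let `H` be a Hilbert space and `ρ` a positive injective trace-class operator.
The set `{ρ^{1/4} x ρ^{3/4} : x ∈ B(H)}` is dense in the Hilbert space `S₂(H)`
of Hilbert-Schmidt operators. -/
theorem iRho_rho_half_denseRange_S2
    {ι H : Type*} [NormedAddCommGroup H] [InnerProductSpace ℂ H] [CompleteSpace H]
    (b : HilbertBasis ι ℂ H) (ρ : H →L[ℂ] H) (hρpos : 0 ≤ ρ)
    (htc : Summable fun i => ⟪b i, ρ (b i)⟫_ℂ)
    (hinj : Function.Injective ρ)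
    (y : H →L[ℂ] H) (hy : Summable fun i => ‖y (b i)‖ ^ 2)
    (ε : ℝ) (hε : 0 < ε) :
    ∃ x : H →L[ℂ] H,
      (Summable fun i => ‖(y - CFC.nnrpow ρ (1/4) * x * CFC.nnrpow ρ (3/4)) (b i)‖ ^ 2)
        ∧ Real.sqrt (∑' i,
            ‖(y - CFC.nnrpow ρ (1/4) * x * CFC.nnrpow ρ (3/4)) (b i)‖ ^ 2) < ε := by
  classical
  have hA : 0 ≤ CFC.nnrpow ρ (1/4) := CFC.nnrpow_nonneg
  have hB : 0 ≤ CFC.nnrpow ρ (3/4) := CFC.nnrpow_nonneg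
  have hAB : CFC.nnrpow ρ (1/4) * CFC.nnrpow ρ (3/4) = ρ := by
    have h := CFC.nnrpow_add (a := ρ) (x := 1/4) (y := 3/4) (by norm_num) (by norm_num)
    rw [show (1/4 + 3/4 : NNReal) = 1 by norm_num, CFC.nnrpow_one ρ] at h
    exact h.symm
  have hBA : CFC.nnrpow ρ (3/4) * CFC.nnrpow ρ (1/4) = ρ := by
    have h := CFC.nnrpow_add (a := ρ) (x := 3/4) (y := 1/4) (by norm_num) (by norm_num)
    rw [show (3/4 + 1/4 : NNReal) = 1 by norm_num, CFC.nnrpow_one ρ] at h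
    exact h.symm
  generalize CFC.nnrpow ρ (1/4) = A at *
  generalize CFC.nnrpow ρ (3/4) = B at *
  have hAi : Function.Injective A := fun u v h => hinj (by
    rw [← hBA, mul_apply_eq_comp, mul_apply_eq_comp, h])
  have hBi : Function.Injective B := fun u v h => hinj (by
    rw [← hAB, mul_apply_eq_comp, mul_apply_eq_comp, h])
  have hR := rankOneFamily_mem_closure b (IsSelfAdjoint.of_nonneg hB)
    (denseRange_of_nonneg_of_injective hA hAi) (denseRange_of_nonneg_of_injective hB hBi)
  let Y : lp (fun _ : ι => H) 2 := ⟨fun i => y (b i), (memlp_two_iff _).2 hy⟩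
  have hsingle : ∀ i, lp.single 2 i (Y i) = rankOneFamily b (y (b i)) (b i) := by
    intro i
    ext j
    rw [rankOneFamily_apply, orthonormal_iff_ite.1 b.orthonormal i j]
    by_cases hij : i = j
    · subst hij
      simp [Y]
    · simp [hij, Ne.symm hij]
  have hY : Y ∈ (sandwichRange b A B).topologicalClosure := by
    refine (sandwichRange b A B).isClosed_topologicalClosure.mem_of_tendsto
      (lp.hasSum_single (by norm_num) Y) (Filter.Eventually.of_forall fun s => ?_)
    exact Submodule.sum_mem _ fun i _ => by rw [hsingle]; exact hR _ _
  obtain ⟨f, ⟨x, hx⟩, hf⟩ := Metric.mem_closure_iff.1 hY ε hε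
  have hcoord : ∀ i, (y - A * x * B) (b i) = (Y - f) i := fun i => by
    rw [lp.coeFn_sub, Pi.sub_apply, hx i]
    rfl
  refine ⟨x, ?_, ?_⟩
  · simp only [hcoord]
    exact (memlp_two_iff _).1 (lp.memℓp (Y - f))
  · simp only [hcoord]
    rwa [← lp_two_norm_eq_sqrt, ← dist_eq_norm]
end
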